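/- arXiv:0709.3882 — 3 statements merged into one kernel-verified Lean document; each statement's English description precedes it below -/
import Mathlib

section
/- Let 𝒳 ⊂ ℙⁿ × ℙ^{N_d} be the universal hypersurface of degree d in ℙⁿ, i.e. the zero locus of Σ_{|α|=d} a_α Z^α where [Z] ∈ ℙⁿ and [a] ∈ ℙ^{N_d}. Then the vector bundle T_𝒳 ⊗ p*𝒪_{ℙⁿ}(1) is generated by its global sections, where p : ℙⁿ × ℙ^{N_d} → ℙⁿ is the first projection. -/
/-!
Fix `k` with `Z k ≠ 0` and put `λ(W) = W k / Z k`, a linear form with `λ(Z) = 1`.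

*Horizontal directions.* The quadratic field `W ↦ λ(W)² u` lifts to the cone: for a form `F_c`, the
product `λ · ∂_u F_c` is again a form of degree `d`, whose coefficients `D c` are linear in `c`, and
`(λ(W)² u, -λ(W) D c)` is tangent to the cone at every `(W, c)`
(`exists_twisted_derivative`, where `X k` replaces `λ`).

*Vertical directions.* If `B` is a linear map from points to forms such that the form `B W` vanishes
at `W` for all `W`, and `ℓ` is a linear functional on coefficients with `ℓ(a) = 1`, then
`(0, ℓ(c) B W)` is tangent everywhere and takes the value `(0, B Z)` at `(Z, a)`. Koszul-type maps
`W ↦ W k • X^(p + δ_i) - W i • X^(p + δ_k)` are of this kind, and their values at `Z` span all forms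
vanishing at `Z` (`mem_vertSpace`): modulo these values, `(Z k)^d X^m` is congruent to
`Z^m (X k)^d` for every exponent `m` of degree `d`.

The section for `(u, b)` is the sum of the horizontal lift of `u` and the vertical section through
`b + D a`, which vanishes at `Z` exactly because `(u, b)` is tangent.
-/

open Set

noncomputable section

/-- Coefficient space for degree-`d` forms in `n+1` variables: a coefficient for each
exponent vector (entries at most `d`). -/
abbrev CoeffSpace (n d : ℕ) := (Fin (n + 1) → Fin (d + 1)) → ℂ

/-- The subspace of coefficient vectors supported on exponents of total degree exactly `d`;
this is the space of degree-`d` homogeneous forms, of projectivization `ℙ^{N_d}`. -/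
def degSpace (n d : ℕ) : Submodule ℂ (CoeffSpace n d) where
  carrier := {a | ∀ σ : Fin (n + 1) → Fin (d + 1), (∑ i, ((σ i : ℕ))) ≠ d → a σ = 0}
  add_mem' := by
    intro a b ha hb σ hσ
    simp [Pi.add_apply, ha σ hσ, hb σ hσ]
  zero_mem' := by intro σ _; rfl
  smul_mem' := by
    intro c a ha σ hσ
    simp [Pi.smul_apply, ha σ hσ]

/-- Evaluation of the degree-`d` form with coefficients `a` at `Z ∈ ℂ^{n+1}`:
`Σ_{|α| = d} a_α Z^α`. -/
def evalForm (n d : ℕ) (a : CoeffSpace n d) (Z : Fin (n + 1) → ℂ) : ℂ :=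
  ∑ σ : Fin (n + 1) → Fin (d + 1),
    if (∑ i, ((σ i : ℕ))) = d then a σ * ∏ i, Z i ^ ((σ i : ℕ)) else 0

/-- The affine cone over the universal hypersurface
`𝒳 = {([Z],[a]) ∈ ℙⁿ × ℙ^{N_d} : Σ_{|α|=d} a_α Z^α = 0}`. -/
def coneX (n d : ℕ) : Set ((Fin (n + 1) → ℂ) × CoeffSpace n d) :=
  {p | p.1 ≠ 0 ∧ p.2 ∈ degSpace n d ∧ p.2 ≠ 0 ∧ evalForm n d p.2 p.1 = 0}

/-- Tangency condition for `(u, b)` at a point `(Z, a)` of the cone over `𝒳`: the linearization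
`Σ b_α Z^α + Σ_j u_j ∂_j(Σ a_α Z^α) = 0`. -/
def IsTangentAt (n d : ℕ) (Z : Fin (n + 1) → ℂ) (a : CoeffSpace n d)
    (u : Fin (n + 1) → ℂ) (b : CoeffSpace n d) : Prop :=
  evalForm n d b Z + fderiv ℂ (evalForm n d a) Z u = 0

/-! ### Monomials and evaluation -/

/-- `evalForm` at a fixed point, as a linear functional of the coefficients. -/
def evalLin (n d : ℕ) (W : Fin (n + 1) → ℂ) : CoeffSpace n d →ₗ[ℂ] ℂ where
  toFun a := evalForm n d a W
  map_add' a b := by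
    simp only [evalForm, ← Finset.sum_add_distrib]
    refine Finset.sum_congr rfl fun σ _ => ?_
    split_ifs <;> simp [add_mul]
  map_smul' c a := by
    simp only [evalForm, RingHom.id_apply, smul_eq_mul, Finset.mul_sum]
    refine Finset.sum_congr rfl fun σ _ => ?_
    split_ifs <;> simp [mul_assoc]

lemma evalLin_apply (n d : ℕ) (W : Fin (n + 1) → ℂ) (a : CoeffSpace n d) :
    evalLin n d W a = evalForm n d a W := rfl

/-- The coefficient vector of the monomial `X^m`, with exponents in `ℕ`; it is zero if some
exponent exceeds `d`. -/
def monoVec (n d : ℕ) (m : Fin (n + 1) → ℕ) : CoeffSpace n d :=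
  fun σ => if (fun i => (σ i : ℕ)) = m then 1 else 0

lemma monoVec_mem (n d : ℕ) {m : Fin (n + 1) → ℕ} (hm : ∑ i, m i = d) :
    monoVec n d m ∈ degSpace n d := by
  intro σ hσ
  have : (fun i => (σ i : ℕ)) ≠ m := by
    rintro rfl
    exact hσ hm
  simp [monoVec, this]

lemma evalForm_monoVec (n d : ℕ) {m : Fin (n + 1) → ℕ} (hm : ∑ i, m i = d)
    (W : Fin (n + 1) → ℂ) : evalForm n d (monoVec n d m) W = ∏ i, W i ^ m i := by
  have hle : ∀ i, m i < d + 1 := fun i =>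
    Nat.lt_succ_of_le (hm ▸ Finset.single_le_sum (fun j _ => Nat.zero_le (m j)) (Finset.mem_univ i))
  unfold evalForm
  rw [Finset.sum_eq_single (fun i => (⟨m i, hle i⟩ : Fin (d + 1)))]
  · simp [monoVec, hm]
  · intro σ _ hσ
    have : (fun i => (σ i : ℕ)) ≠ m := by
      intro h
      apply hσ
      funext i
      exact Fin.ext (congrFun h i)
    simp [monoVec, this]
  · simp

lemma sum_smul_monoVec (n d : ℕ) (b : CoeffSpace n d) :
    ∑ σ, b σ • monoVec n d (fun i => (σ i : ℕ)) = b := by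
  funext τ
  simp only [Finset.sum_apply, Pi.smul_apply, smul_eq_mul]
  rw [Finset.sum_eq_single τ]
  · simp [monoVec]
  · intro σ _ hσ
    have : (fun i => (τ i : ℕ)) ≠ (fun i => (σ i : ℕ)) := by
      intro h
      apply hσ
      funext i
      exact Fin.ext (congrFun h i).symm
    simp [monoVec, this]
  · simp

lemma sum_add_single {n : ℕ} (p : Fin (n + 1) → ℕ) (i : Fin (n + 1)) :
    ∑ j, (p + Pi.single i 1 : Fin (n + 1) → ℕ) j = ∑ j, p j + 1 := by
  simp [Finset.sum_add_distrib]

lemma prod_add_single {n : ℕ} (W : Fin (n + 1) → ℂ) (p : Fin (n + 1) → ℕ) (i : Fin (n + 1)) :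
    ∏ j, W j ^ (p + Pi.single i 1 : Fin (n + 1) → ℕ) j = W i * ∏ j, W j ^ p j := by
  simp only [Pi.add_apply, pow_add, Finset.prod_mul_distrib]
  rw [mul_comm, Finset.prod_eq_single i (f := fun j => W j ^ (Pi.single i 1 : Fin (n + 1) → ℕ) j)]
  · simp
  · intro j _ hj
    simp [hj]
  · simp

lemma exists_eq_add_single {n : ℕ} {m : Fin (n + 1) → ℕ} {i : Fin (n + 1)} (hi : m i ≠ 0) :
    ∃ p : Fin (n + 1) → ℕ, m = p + Pi.single i 1 := by
  refine ⟨m - Pi.single i 1, ?_⟩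
  funext j
  by_cases h : j = i
  · subst h
    simp
    omega
  · simp [h]

/-! ### Vertical directions -/

/-- The forms `B Z`, where `B` runs over linear maps from points to degree-`d` forms such that the
form `B W` vanishes at `W` for every `W`. -/
def vertSpace (n d : ℕ) (Z : Fin (n + 1) → ℂ) : Submodule ℂ (CoeffSpace n d) where
  carrier := {b | ∃ B : (Fin (n + 1) → ℂ) →ₗ[ℂ] CoeffSpace n d,
    (∀ W, B W ∈ degSpace n d ∧ evalForm n d (B W) W = 0) ∧ B Z = b}
  add_mem' := by
    rintro _ _ ⟨B, hB, rfl⟩ ⟨C, hC, rfl⟩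
    refine ⟨B + C, fun W => ⟨add_mem (hB W).1 (hC W).1, ?_⟩, rfl⟩
    rw [← evalLin_apply, LinearMap.add_apply, map_add, evalLin_apply, evalLin_apply, (hB W).2,
      (hC W).2, add_zero]
  zero_mem' := ⟨0, fun W => ⟨zero_mem _, map_zero (evalLin n d W)⟩, rfl⟩
  smul_mem' := by
    rintro c _ ⟨B, hB, rfl⟩
    refine ⟨c • B, fun W => ⟨Submodule.smul_mem _ c (hB W).1, ?_⟩, rfl⟩
    rw [← evalLin_apply, LinearMap.smul_apply, map_smul, evalLin_apply, (hB W).2, smul_zero]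

lemma koszul_mem (n d : ℕ) (Z : Fin (n + 1) → ℂ) (k i : Fin (n + 1)) (p : Fin (n + 1) → ℕ)
    (hp : ∑ j, p j + 1 = d) :
    Z k • monoVec n d (p + Pi.single i 1) - Z i • monoVec n d (p + Pi.single k 1) ∈
      vertSpace n d Z := by
  have hi := (sum_add_single p i).trans hp
  have hk := (sum_add_single p k).trans hp
  refine ⟨(LinearMap.proj k).smulRight (monoVec n d (p + Pi.single i 1)) -
    (LinearMap.proj i).smulRight (monoVec n d (p + Pi.single k 1)), fun W => ⟨?_, ?_⟩, ?_⟩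
  · exact sub_mem (Submodule.smul_mem _ _ (monoVec_mem n d hi))
      (Submodule.smul_mem _ _ (monoVec_mem n d hk))
  · rw [← evalLin_apply]
    simp only [LinearMap.sub_apply, LinearMap.smulRight_apply, LinearMap.proj_apply, map_sub,
      map_smul, evalLin_apply, evalForm_monoVec n d hi, evalForm_monoVec n d hk, prod_add_single,
      smul_eq_mul]
    ring
  · simp

/-- Modulo `vertSpace`, each factor `X i` of a monomial may be traded for `X k` at the cost of the
scalar `Z i / Z k`; the factor `(X k)^t` collects those already traded. -/
lemma trade_mem (n d : ℕ) (Z : Fin (n + 1) → ℂ) (k : Fin (n + 1)) :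
    ∀ (r t : ℕ) (p : Fin (n + 1) → ℕ), ∑ j, p j = r → r + t = d →
      Z k ^ r • monoVec n d (p + Pi.single k t) -
        (∏ j, Z j ^ p j) • monoVec n d (Pi.single k d) ∈ vertSpace n d Z := by
  intro r
  induction r with
  | zero =>
    intro t p hp ht
    have hp0 : p = 0 := by
      funext j
      exact (Finset.sum_eq_zero_iff.mp hp) j (Finset.mem_univ j)
    have : t = d := by omega
    subst hp0 this
    simp
  | succ r ih =>
    intro t p hp ht
    obtain ⟨i, hi⟩ : ∃ i, p i ≠ 0 := by
      by_contra! h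
      simp [h] at hp
    obtain ⟨q, rfl⟩ := exists_eq_add_single hi
    rw [sum_add_single] at hp
    have hq : ∑ j, q j = r := by omega
    have h1 := ih (t + 1) q hq (by omega)
    have h2 := koszul_mem n d Z k i (q + Pi.single k t) (by
      simp [Finset.sum_add_distrib, hq]
      omega)
    have e1 : q + Pi.single k t + Pi.single i 1 = q + Pi.single i 1 + Pi.single k t := by
      abel
    have e2 : q + Pi.single k t + Pi.single k 1 = q + Pi.single k (t + 1) := by
      rw [add_assoc, ← Pi.single_add]
    rw [e1, e2] at h2
    have h3 := add_mem (Submodule.smul_mem _ (Z k ^ r) h2) (Submodule.smul_mem _ (Z i) h1)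
    convert h3 using 1
    rw [prod_add_single]
    module

/-- Every form vanishing at `Z` is the value at `Z` of a vertical map. -/
lemma mem_vertSpace (n d : ℕ) {Z : Fin (n + 1) → ℂ} {k : Fin (n + 1)} (hk : Z k ≠ 0)
    {b : CoeffSpace n d} (hb : b ∈ degSpace n d) (hbZ : evalForm n d b Z = 0) :
    b ∈ vertSpace n d Z := by
  have key : Z k ^ d • b = ∑ σ : Fin (n + 1) → Fin (d + 1), b σ •
      (Z k ^ d • monoVec n d (fun i => (σ i : ℕ)) -
        (∏ j, Z j ^ (σ j : ℕ)) • monoVec n d (Pi.single k d)) := by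
    have hsum : ∑ σ : Fin (n + 1) → Fin (d + 1), b σ * ∏ j, Z j ^ (σ j : ℕ) = 0 := by
      rw [← hbZ]
      refine Finset.sum_congr rfl fun σ _ => ?_
      split_ifs with h
      · rfl
      · rw [hb σ h, zero_mul]
    simp only [smul_sub, Finset.sum_sub_distrib, smul_smul, ← Finset.sum_smul, hsum, zero_smul,
      sub_zero]
    conv_lhs => rw [← sum_smul_monoVec n d b]
    simp only [Finset.smul_sum, smul_smul, mul_comm]
  have hmem : Z k ^ d • b ∈ vertSpace n d Z := by
    rw [key]
    refine Submodule.sum_mem _ fun σ _ => ?_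
    by_cases h : ∑ i, (σ i : ℕ) = d
    · have := trade_mem n d Z k d 0 (fun i => (σ i : ℕ)) h rfl
      rw [Pi.single_zero, add_zero] at this
      exact Submodule.smul_mem _ _ this
    · rw [hb σ h, zero_smul]
      exact zero_mem _
  exact (Submodule.smul_mem_iff _ (pow_ne_zero d hk)).mp hmem

/-! ### Horizontal directions -/

lemma differentiable_monomial {n : ℕ} (m : Fin (n + 1) → ℕ) :
    Differentiable ℂ (fun W : Fin (n + 1) → ℂ => ∏ i, W i ^ m i) := by
  fun_prop

/-- `W k` times the derivative of `X^m` along `u` is again a form of degree `d = |m|`. -/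
lemma exists_twisted_derivative_monomial (n d : ℕ) (k : Fin (n + 1)) (u : Fin (n + 1) → ℂ)
    (m : Fin (n + 1) → ℕ) (hm : ∑ i, m i = d) :
    ∃ v ∈ degSpace n d, ∀ W : Fin (n + 1) → ℂ,
      evalForm n d v W = W k * fderiv ℂ (fun W : Fin (n + 1) → ℂ => ∏ i, W i ^ m i) W u := by
  have hder : ∀ W : Fin (n + 1) → ℂ,
      fderiv ℂ (fun W : Fin (n + 1) → ℂ => ∏ i, W i ^ m i) W u =
        ∑ i, (∏ j ∈ Finset.univ.erase i, W j ^ m j) * ((m i : ℂ) * W i ^ (m i - 1) * u i) := by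
    intro W
    have h : ∀ i ∈ (Finset.univ : Finset (Fin (n + 1))),
        HasFDerivAt (fun W : Fin (n + 1) → ℂ => W i ^ m i)
          (((m i : ℂ) * W i ^ (m i - 1)) •
            (ContinuousLinearMap.proj i : (Fin (n + 1) → ℂ) →L[ℂ] ℂ)) W := by
      intro i _
      have := (hasFDerivAt_apply (𝕜 := ℂ) i W).pow (m i)
      simpa using this
    rw [(HasFDerivAt.finsetProd h).fderiv]
    simp
  have hterm : ∀ i, ∃ v ∈ degSpace n d, ∀ W : Fin (n + 1) → ℂ, evalForm n d v W =
      W k * ((∏ j ∈ Finset.univ.erase i, W j ^ m j) * ((m i : ℂ) * W i ^ (m i - 1) * u i)) := by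
    intro i
    by_cases hi : m i = 0
    · exact ⟨0, zero_mem _, fun W => (map_zero (evalLin n d W)).trans (by simp [hi])⟩
    obtain ⟨p, rfl⟩ := exists_eq_add_single hi
    rw [sum_add_single] at hm
    have hk := (sum_add_single p k).trans hm
    refine ⟨(((p + Pi.single i 1 : Fin (n + 1) → ℕ) i : ℂ) * u i) • monoVec n d (p + Pi.single k 1),
      Submodule.smul_mem _ _ (monoVec_mem n d hk), fun W => ?_⟩
    rw [← evalLin_apply, map_smul, evalLin_apply, evalForm_monoVec n d hk, prod_add_single,
      ← Finset.mul_prod_erase Finset.univ (fun j => W j ^ p j) (Finset.mem_univ i)]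
    have : ∏ j ∈ Finset.univ.erase i, W j ^ (p + Pi.single i 1 : Fin (n + 1) → ℕ) j =
        ∏ j ∈ Finset.univ.erase i, W j ^ p j := by
      refine Finset.prod_congr rfl fun j hj => ?_
      simp [Finset.ne_of_mem_erase hj]
    rw [this]
    simp
    ring
  choose v hv hvW using hterm
  refine ⟨∑ i, v i, Submodule.sum_mem _ fun i _ => hv i, fun W => ?_⟩
  rw [← evalLin_apply, map_sum, hder, Finset.mul_sum]
  exact Finset.sum_congr rfl fun i _ => hvW i W

/-- The operator `F ↦ X k · ∂_u F` on coefficients of degree-`d` forms. -/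
lemma exists_twisted_derivative (n d : ℕ) (k : Fin (n + 1)) (u : Fin (n + 1) → ℂ) :
    ∃ D : CoeffSpace n d →ₗ[ℂ] CoeffSpace n d, ∀ c, D c ∈ degSpace n d ∧
      ∀ W, evalForm n d (D c) W = W k * fderiv ℂ (evalForm n d c) W u := by
  have hmono : ∀ σ : Fin (n + 1) → Fin (d + 1), ∃ v ∈ degSpace n d, ∀ W : Fin (n + 1) → ℂ,
      evalForm n d v W = if (∑ i, (σ i : ℕ)) = d then
        W k * fderiv ℂ (fun W : Fin (n + 1) → ℂ => ∏ i, W i ^ (σ i : ℕ)) W u else 0 := by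
    intro σ
    split_ifs with h
    · exact exists_twisted_derivative_monomial n d k u (fun i => (σ i : ℕ)) h
    · exact ⟨0, zero_mem _, fun W => map_zero (evalLin n d W)⟩
  choose v hv hvW using hmono
  refine ⟨∑ σ, (LinearMap.proj σ).smulRight (v σ), fun c => ⟨?_, fun W => ?_⟩⟩
  · rw [LinearMap.sum_apply]
    exact Submodule.sum_mem _ fun σ _ => Submodule.smul_mem _ _ (hv σ)
  · have hder : fderiv ℂ (evalForm n d c) W u = ∑ σ : Fin (n + 1) → Fin (d + 1),
        if (∑ i, (σ i : ℕ)) = d then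
          c σ * fderiv ℂ (fun W : Fin (n + 1) → ℂ => ∏ i, W i ^ (σ i : ℕ)) W u else 0 := by
      have h : ∀ σ ∈ (Finset.univ : Finset (Fin (n + 1) → Fin (d + 1))),
          HasFDerivAt (fun W : Fin (n + 1) → ℂ =>
            if (∑ i, (σ i : ℕ)) = d then c σ * ∏ i, W i ^ (σ i : ℕ) else 0)
          (if (∑ i, (σ i : ℕ)) = d then
            c σ • fderiv ℂ (fun W : Fin (n + 1) → ℂ => ∏ i, W i ^ (σ i : ℕ)) W else 0) W := by
        intro σ _
        split_ifs
        · exact ((differentiable_monomial (fun i => (σ i : ℕ))) W).hasFDerivAt.const_mul (c σ)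
        · exact hasFDerivAt_const _ _
      have hs : HasFDerivAt (evalForm n d c) _ W := HasFDerivAt.fun_sum h
      rw [hs.fderiv, _root_.sum_apply]
      refine Finset.sum_congr rfl fun σ _ => ?_
      split_ifs <;> simp
    rw [hder, ← evalLin_apply, LinearMap.sum_apply, map_sum, Finset.mul_sum]
    refine Finset.sum_congr rfl fun σ _ => ?_
    rw [LinearMap.smulRight_apply, map_smul, evalLin_apply, hvW]
    split_ifs
    · simp
      ring
    · simp

/-! ### Global generation -/

/-- **Global generation of `T_𝒳 ⊗ p*𝒪_{ℙⁿ}(1)`** (Siu–Yeung, Clemens, Ein, Voisin).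
In cone coordinates, a global holomorphic section of `T_𝒳 ⊗ p*𝒪_{ℙⁿ}(1)` is a holomorphic
map `s = (s₁, s₂)` on the cone, tangent to it, with values defined modulo the Euler directions
`(Z, 0)` and `(0, a)`, and with the homogeneity `s(λZ, μa) = (λ² s₁, λμ s₂)` encoding the twist
by `p*𝒪_{ℙⁿ}(1)`.  Global generation means: every tangent vector at every point of `𝒳` is the
value of such a section. -/
theorem universal_hypersurface_twisted_tangent_globally_generated
    (n d : ℕ) (hn : 1 ≤ n) (hd : 1 ≤ d)
    (Z : Fin (n + 1) → ℂ) (a : CoeffSpace n d) (hZa : (Z, a) ∈ coneX n d)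
    (u : Fin (n + 1) → ℂ) (b : CoeffSpace n d) (hb : b ∈ degSpace n d)
    (htan : IsTangentAt n d Z a u b) :
    ∃ s : ((Fin (n + 1) → ℂ) × CoeffSpace n d) → (Fin (n + 1) → ℂ) × CoeffSpace n d,
      Differentiable ℂ s ∧
      (∀ W c, (W, c) ∈ coneX n d →
        (s (W, c)).2 ∈ degSpace n d ∧ IsTangentAt n d W c (s (W, c)).1 (s (W, c)).2) ∧
      (∀ (lam mu : ℂ) (W : Fin (n + 1) → ℂ) (c : CoeffSpace n d),
        s (lam • W, mu • c) = (lam ^ 2 • (s (W, c)).1, (lam * mu) • (s (W, c)).2)) ∧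
      (∃ al be : ℂ, (s (Z, a)).1 = u + al • Z ∧ (s (Z, a)).2 = b + be • a) := by
  obtain ⟨hZ, -, ha0, -⟩ := hZa
  obtain ⟨k, hk⟩ := Function.ne_iff.mp hZ
  obtain ⟨τ, hτ⟩ := Function.ne_iff.mp ha0
  simp only [Pi.zero_apply] at hk hτ
  obtain ⟨D, hD⟩ := exists_twisted_derivative n d k u
  -- The vertical defect `b + λ · ∂_u a` vanishes at `Z` by tangency.
  have hbZ : evalForm n d (b + (Z k)⁻¹ • D a) Z = 0 := by
    rw [← evalLin_apply, map_add, map_smul, evalLin_apply, evalLin_apply, (hD a).2, smul_eq_mul,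
      inv_mul_cancel_left₀ hk]
    exact htan
  obtain ⟨B, hB, hBZ⟩ := mem_vertSpace n d hk
    (add_mem hb (Submodule.smul_mem _ (Z k)⁻¹ (hD a).1)) hbZ
  have hBdiff : Differentiable ℂ B := (LinearMap.toContinuousLinearMap B).differentiable
  have hDdiff : Differentiable ℂ D := (LinearMap.toContinuousLinearMap D).differentiable
  refine ⟨fun q => ((q.1 k * (Z k)⁻¹) ^ 2 • u,
    (q.2 τ * (a τ)⁻¹) • B q.1 - (q.1 k * (Z k)⁻¹ * (Z k)⁻¹) • D q.2), ?_, ?_, ?_, 0, 0, ?_, ?_⟩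
  · have h1 : Differentiable ℂ
        (fun q : (Fin (n + 1) → ℂ) × CoeffSpace n d => B q.1) := hBdiff.comp differentiable_fst
    have h2 : Differentiable ℂ
        (fun q : (Fin (n + 1) → ℂ) × CoeffSpace n d => D q.2) := hDdiff.comp differentiable_snd
    have h3 : Differentiable ℂ
        (fun q : (Fin (n + 1) → ℂ) × CoeffSpace n d => q.1 k) := by fun_prop
    have h4 : Differentiable ℂ
        (fun q : (Fin (n + 1) → ℂ) × CoeffSpace n d => q.2 τ) := by fun_prop
    fun_prop
  · intro W c _
    refine ⟨sub_mem (Submodule.smul_mem _ _ (hB W).1) (Submodule.smul_mem _ _ (hD c).1), ?_⟩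
    unfold IsTangentAt
    simp only [← evalLin_apply, map_sub, map_smul]
    simp only [evalLin_apply, (hB W).2, (hD c).2, smul_eq_mul]
    ring
  · intro lam mu W c
    simp only [Pi.smul_apply, smul_eq_mul, map_smul, Prod.mk.injEq, smul_smul, smul_sub]
    refine ⟨?_, ?_⟩
    · congr 1
      ring
    · congr 2 <;> ring
  · simp [hk]
  · simp only [mul_inv_cancel₀ hτ, mul_inv_cancel₀ hk, hBZ]
    module
end
end

section
/- In dimension 2, the algebra A₃ of germs of invariant jet differential operators of order 3 satisfies A₃ = A₃[f₁'⁻¹] ∩ A₃[f₂'⁻¹], the intersection being taken inside the localization of the polynomial ring ℂ[f₁', f₂', f₁'', f₂'', f₁''', f₂''']. -/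
/-!
An element of the intersection is `P / f₁'ᵐ = Q / f₂'ⁿ` with `P`, `Q` invariant, so
`P f₂'ⁿ = Q f₁'ᵐ` in the polynomial ring. As `f₁'` is a prime that does not divide `f₂'`, its power
`f₁'ᵐ` divides `P`, and the fraction is a polynomial `R` with `f₁'ᵐ R = P`. Since `f₁'` is itself
invariant and the polynomial ring is a domain, `R` is invariant (`mem_A3_of_X_pow_mul_mem`).
-/

open MvPolynomial

noncomputable section

/-- The polynomial ring `ℂ[f₁', f₂', f₁'', f₂'', f₁''', f₂''']` in the derivatives of a germ of
curve `f = (f₁, f₂) : (ℂ,0) → ℂ²`: the variable `(i, j)` stands for `f_{i+1}^{(j+1)}`. -/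
abbrev JetRing2 := MvPolynomial (Fin 2 × Fin 3) ℂ

/-- The substitution on derivatives induced by a reparametrization
`φ(t) = t + b₂t² + b₃t³ + O(t⁴)` tangent to the identity:
`f' ↦ f'`, `f'' ↦ f'' + 2b₂f'`, `f''' ↦ f''' + 6b₂f'' + 6b₃f'`. -/
def reparamVar (b₂ b₃ : ℂ) (v : Fin 2 × Fin 3) : JetRing2 :=
  if v.2 = 0 then X v
  else if v.2 = 1 then X (v.1, 1) + C (2 * b₂) * X (v.1, 0)
  else X (v.1, 2) + C (6 * b₂) * X (v.1, 1) + C (6 * b₃) * X (v.1, 0)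

/-- The algebra `A₃` of invariant jet differential operators of order 3 in dimension 2: the
polynomials in the derivatives invariant under the unipotent group `G₃'` of 3-jets of
reparametrizations tangent to the identity. -/
def A3 : Set JetRing2 :=
  {Q | ∀ b₂ b₃ : ℂ, aeval (reparamVar b₂ b₃) Q = Q}

/-- The localization `A₃[fᵢ'⁻¹]`, inside the fraction field of the polynomial ring. -/
def A3Loc (i : Fin 2) : Set (FractionRing JetRing2) :=
  {y | ∃ P ∈ A3, ∃ m : ℕ,
    y = algebraMap JetRing2 (FractionRing JetRing2) P /
      (algebraMap JetRing2 (FractionRing JetRing2) (X (i, 0))) ^ m}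

/-- `A₃` is saturated with respect to the invariant `fᵢ'`: dividing by it inside the polynomial
ring does not lose invariance. -/
lemma mem_A3_of_X_pow_mul_mem (i : Fin 2) (m : ℕ) (R : JetRing2)
    (h : X (i, 0) ^ m * R ∈ A3) : R ∈ A3 := by
  intro b₂ b₃
  have hb := h b₂ b₃
  rw [map_mul, map_pow, aeval_X, reparamVar, if_pos rfl] at hb
  exact mul_left_cancel₀ (pow_ne_zero m (X_ne_zero _)) hb

/-- **`A₃ = A₃[f₁'⁻¹] ∩ A₃[f₂'⁻¹]`** (in dimension 2), the intersection being taken inside the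
localization (fraction field) of the polynomial ring in the derivatives. -/
theorem A3_eq_inter_localizations :
    A3Loc 0 ∩ A3Loc 1 = algebraMap JetRing2 (FractionRing JetRing2) '' A3 := by
  ext y
  constructor
  · rintro ⟨⟨P, hP, m, rfl⟩, Q, hQ, n, hy⟩
    have hX (i : Fin 2) :
        algebraMap JetRing2 (FractionRing JetRing2) (X (i, 0)) ≠ 0 := by
      simp [X_ne_zero]
    have hcross : P * X (1, 0) ^ n = Q * X (0, 0) ^ m := by
      apply IsFractionRing.injective JetRing2 (FractionRing JetRing2)
      rw [div_eq_div_iff (pow_ne_zero m (hX 0)) (pow_ne_zero n (hX 1))] at hy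
      simpa only [map_mul, map_pow] using hy
    have hprime : Prime (X (0, 0) : JetRing2) := X_prime
    have hndvd : ¬ (X (0, 0) : JetRing2) ∣ X (1, 0) ^ n := fun h => by
      simpa using X_dvd_X.mp (hprime.dvd_of_dvd_pow h)
    obtain ⟨R, rfl⟩ : X (0, 0) ^ m ∣ P :=
      hprime.pow_dvd_of_dvd_mul_right m hndvd ⟨Q, by rw [hcross, mul_comm]⟩
    refine ⟨R, mem_A3_of_X_pow_mul_mem 0 m R hP, ?_⟩
    rw [map_mul, map_pow, mul_div_cancel_left₀ _ (pow_ne_zero m (hX 0))]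
  · rintro ⟨P, hP, rfl⟩
    exact ⟨⟨P, hP, 0, by simp⟩, P, hP, 0, by simp⟩
end
end

section
/- Demailly's theorem on invariant 3-jet differentials in dimension 2: A₃ = ℂ[f₁', f₂', w₁₂¹, w₁₂²][w₁₂], where w₁₂ = f₁'f₂'' − f₁''f₂', w₁₂ⁱ = f_i'(f₁'f₂''' − f₁'''f₂') − 3f_i''(f₁'f₂'' − f₁''f₂') for i = 1, 2, and these generators satisfy the relation 3(w₁₂)² = f₂'w₁₂¹ − f₁'w₁₂². Moreover w₁₂ is quadratic (of degree exactly 2) over ℂ[f₁', f₂', w₁₂¹, w₁₂²], and the four elements f₁', f₂', w₁₂¹, w₁₂² are algebraically independent. -/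
/-!
Let `B` be the algebra generated by `x₁, x₂, w1, w2, w`. Its generators are visibly invariant.
Conversely, at a jet with `f₁' ≠ 0` some reparametrization kills both `f₁''` and `f₁'''`; the
remaining coordinates become `f₁', f₂', w / f₁', w1 / f₁'²`, so every invariant `Q` satisfies
`x₁ ^ N * Q ∈ B` for some `N` (`exists_pow_mul_mem`).

It remains to cancel `x₁` (`mem_of_x₁_mul_mem`). By the relation `3w² = x₂ w1 - x₁ w2`, an element
of `B` has the form `p + q w` with `p, q` polynomials in `x₁, x₂, w1, w2` (`exists_normal_form`).
If it is divisible by `x₁`, it vanishes at all jets with `f₁' = 0`. There, as soon as `f₂' ≠ 0`,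
the values of `x₂, w1, w2` are arbitrary and `w` may be either square root of `x₂ w1 / 3`;
comparing the two signs, both `p` and `q` vanish for `x₁ = 0`, hence are divisible by `x₁`.

The involution `f'' ↦ -f''` fixes `x₁, x₂, w1, w2` and changes the sign of `w`, so `P w = Q` forces
`Q = -Q = 0`. Algebraic independence holds because `(x₁, x₂, w1, w2)` takes every value in `ℂ⁴`
with nonzero first coordinate.
-/

open MvPolynomial

noncomputable section

/-- `f₁'`. -/ def x₁ : JetRing2 := X (0, 0)
/-- `f₂'`. -/ def x₂ : JetRing2 := X (1, 0)
/-- The Wronskian `w₁₂ = f₁'f₂'' - f₁''f₂'`. -/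
def w : JetRing2 := X (0, 0) * X (1, 1) - X (0, 1) * X (1, 0)
/-- `w₁₂¹ = f₁'(f₁'f₂''' - f₁'''f₂') - 3f₁''(f₁'f₂'' - f₁''f₂')`. -/
def w1 : JetRing2 :=
  X (0, 0) * (X (0, 0) * X (1, 2) - X (0, 2) * X (1, 0)) - C 3 * X (0, 1) * w
/-- `w₁₂² = f₂'(f₁'f₂''' - f₁'''f₂') - 3f₂''(f₁'f₂'' - f₁''f₂')`. -/
def w2 : JetRing2 :=
  X (1, 0) * (X (0, 0) * X (1, 2) - X (0, 2) * X (1, 0)) - C 3 * X (1, 1) * w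

/-- The jet with the given derivatives, as a point at which elements of `JetRing2` are evaluated:
`a`, `b`, `c` stand for first, second and third derivatives, the index for the component of `f`. -/
def jetPt (a₁ a₂ b₁ b₂ c₁ c₂ : ℂ) : Fin 2 × Fin 3 → ℂ :=
  fun i => ![![a₁, b₁, c₁], ![a₂, b₂, c₂]] i.1 i.2

lemma eval_aeval_eq {σ τ : Type*} (v : τ → ℂ) (g : σ → MvPolynomial τ ℂ) (p : MvPolynomial σ ℂ) :
    eval v (aeval g p) = eval (fun i => eval v (g i)) p := by
  induction p using MvPolynomial.induction_on with
  | C a => simp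
  | add p q hp hq => rw [map_add, map_add, map_add, hp, hq]
  | mul_X p i hp => rw [map_mul, map_mul, map_mul, hp, aeval_X, eval_X]

/-- A polynomial vanishing wherever a given coordinate is nonzero is zero. -/
lemma eq_zero_of_eval {σ : Type*} (i : σ) (p : MvPolynomial σ ℂ)
    (h : ∀ v : σ → ℂ, v i ≠ 0 → eval v p = 0) : p = 0 := by
  have h1 : X i * p = 0 := by
    apply MvPolynomial.funext
    intro v
    by_cases hv : v i = 0
    · simp [hv]
    · simp [h v hv]
  exact (mul_eq_zero.mp h1).resolve_left (X_ne_zero i)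

/-- A polynomial vanishing on the hyperplane `X 0 = 0` is divisible by `X 0`; it is enough to
test the points where `X 1` and `X 2` do not vanish. -/
lemma X_dvd_of_eval (p : MvPolynomial (Fin 4) ℂ)
    (h : ∀ a b c : ℂ, a ≠ 0 → b ≠ 0 → eval ![0, a, b, c] p = 0) : X 0 ∣ p := by
  set g : Fin 4 → MvPolynomial (Fin 4) ℂ := ![0, X 1, X 2, X 3] with hg
  have h0 : aeval g p = 0 := by
    have h1 : X 2 * aeval g p = 0 := by
      refine eq_zero_of_eval 1 _ fun v hv => ?_
      have e : (fun i => eval v (g i)) = ![0, v 1, v 2, v 3] := by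
        funext i
        fin_cases i <;> simp [hg]
      rw [map_mul, eval_X, eval_aeval_eq, e]
      by_cases h2 : v 2 = 0
      · simp [h2]
      · simp [h _ _ _ hv h2]
    exact (mul_eq_zero.mp h1).resolve_left (X_ne_zero 2)
  have hd : ∀ q : MvPolynomial (Fin 4) ℂ, X 0 ∣ q - aeval g q := by
    intro q
    induction q using MvPolynomial.induction_on with
    | C a => simp
    | add p q hp hq =>
      rw [map_add, add_sub_add_comm]
      exact dvd_add hp hq
    | mul_X p i hp =>
      have hi : (X 0 : MvPolynomial (Fin 4) ℂ) ∣ X i - g i := by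
        fin_cases i <;> simp [hg]
      have e : p * X i - aeval g (p * X i) = (p - aeval g p) * X i + aeval g p * (X i - g i) := by
        rw [map_mul, aeval_X]; ring
      rw [e]
      exact dvd_add (hp.mul_right _) (hi.mul_left _)
  have := hd p
  rwa [h0, sub_zero] at this

lemma wronskian_relation : C 3 * w ^ 2 = x₂ * w1 - x₁ * w2 := by
  simp only [w1, w2, x₁, x₂, w]
  ring

/-- `ℂ[x₁, x₂, w1, w2, w]`. -/
abbrev genAlg : Subalgebra ℂ JetRing2 := Algebra.adjoin ℂ ({x₁, x₂, w1, w2, w} : Set JetRing2)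

lemma x₁_mem : x₁ ∈ genAlg := Algebra.subset_adjoin (by simp)
lemma x₂_mem : x₂ ∈ genAlg := Algebra.subset_adjoin (by simp)
lemma w1_mem : w1 ∈ genAlg := Algebra.subset_adjoin (by simp)
lemma w2_mem : w2 ∈ genAlg := Algebra.subset_adjoin (by simp)
lemma w_mem : w ∈ genAlg := Algebra.subset_adjoin (by simp)

lemma aeval_mem (p : MvPolynomial (Fin 4) ℂ) : aeval ![x₁, x₂, w1, w2] p ∈ genAlg := by
  induction p using MvPolynomial.induction_on with
  | C a => simpa using genAlg.algebraMap_mem a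
  | add p q hp hq => simpa using add_mem hp hq
  | mul_X p i hp =>
    rw [map_mul, aeval_X]
    refine mul_mem hp ?_
    fin_cases i
    exacts [x₁_mem, x₂_mem, w1_mem, w2_mem]

lemma exists_normal_form {P : JetRing2} (hP : P ∈ genAlg) :
    ∃ p q : MvPolynomial (Fin 4) ℂ,
      P = aeval ![x₁, x₂, w1, w2] p + aeval ![x₁, x₂, w1, w2] q * w := by
  induction hP using Algebra.adjoin_induction with
  | mem x hx =>
    rcases hx with rfl | rfl | rfl | rfl | rfl
    · exact ⟨X 0, 0, by simp⟩
    · exact ⟨X 1, 0, by simp⟩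
    · exact ⟨X 2, 0, by simp⟩
    · exact ⟨X 3, 0, by simp⟩
    · exact ⟨0, 1, by simp⟩
  | algebraMap r => exact ⟨C r, 0, by simp⟩
  | add x y _ _ hx hy =>
    obtain ⟨p, q, rfl⟩ := hx
    obtain ⟨p', q', rfl⟩ := hy
    exact ⟨p + p', q + q', by simp only [map_add]; ring⟩
  | mul x y _ _ hx hy =>
    obtain ⟨p, q, rfl⟩ := hx
    obtain ⟨p', q', rfl⟩ := hy
    have hw : w ^ 2 = C (1 / 3) * (x₂ * w1 - x₁ * w2) := by
      rw [← wronskian_relation, ← mul_assoc, ← C_mul]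
      norm_num
    refine ⟨p * p' + q * q' * (C (1 / 3) * (X 1 * X 2 - X 0 * X 3)), p * q' + q * p', ?_⟩
    have e : aeval ![x₁, x₂, w1, w2] (C (1 / 3) * (X 1 * X 2 - X 0 * X 3) : MvPolynomial (Fin 4) ℂ)
        = w ^ 2 := by
      rw [hw]
      simp [algebraMap_eq]
    rw [map_add, map_mul, map_mul _ (q * q'), e]
    simp only [map_add, map_mul]
    ring

lemma eval_jetPt (a₁ a₂ b₁ b₂ c₁ c₂ : ℂ) :
    eval (jetPt a₁ a₂ b₁ b₂ c₁ c₂) x₁ = a₁ ∧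
    eval (jetPt a₁ a₂ b₁ b₂ c₁ c₂) x₂ = a₂ ∧
    eval (jetPt a₁ a₂ b₁ b₂ c₁ c₂) w = a₁ * b₂ - b₁ * a₂ ∧
    eval (jetPt a₁ a₂ b₁ b₂ c₁ c₂) w1 =
      a₁ * (a₁ * c₂ - c₁ * a₂) - 3 * b₁ * (a₁ * b₂ - b₁ * a₂) ∧
    eval (jetPt a₁ a₂ b₁ b₂ c₁ c₂) w2 =
      a₂ * (a₁ * c₂ - c₁ * a₂) - 3 * b₂ * (a₁ * b₂ - b₁ * a₂) := by
  simp [x₁, x₂, w1, w2, w, jetPt]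

lemma eval_aeval_gens (v : Fin 2 × Fin 3 → ℂ) (p : MvPolynomial (Fin 4) ℂ) :
    eval v (aeval ![x₁, x₂, w1, w2] p) =
      eval ![eval v x₁, eval v x₂, eval v w1, eval v w2] p := by
  rw [eval_aeval_eq]
  congr 2
  funext i
  fin_cases i <;> rfl

lemma mem_of_x₁_mul_mem {P : JetRing2} (h : x₁ * P ∈ genAlg) : P ∈ genAlg := by
  obtain ⟨p, q, hpq⟩ := exists_normal_form h
  have key : ∀ a s c : ℂ, a ≠ 0 →
      eval ![0, a, 3 * s ^ 2 / a, c] p + eval ![0, a, 3 * s ^ 2 / a, c] q * s = 0 := by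
    intro a s c ha
    -- a jet with `f₁' = 0` at which `x₂ = a`, `w = s`, `w2 = c`
    obtain ⟨e1, e2, e3, e4, e5⟩ := eval_jetPt 0 a (-s / a) 0 (-c / a ^ 2) 0
    have := congrArg (eval (jetPt 0 a (-s / a) 0 (-c / a ^ 2) 0)) hpq
    rw [map_mul, map_add, map_mul, eval_aeval_gens, eval_aeval_gens, e1, e2, e3, e4, e5] at this
    have f3 : 0 * 0 - -s / a * a = s := by field_simp; ring
    have f4 : 0 * (0 * 0 - -c / a ^ 2 * a) - 3 * (-s / a) * s = 3 * s ^ 2 / a := by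
      field_simp; ring
    have f5 : a * (0 * 0 - -c / a ^ 2 * a) - 3 * 0 * s = c := by field_simp; ring
    rw [f3, f4, f5, zero_mul] at this
    exact this.symm
  have both : ∀ a b c : ℂ, a ≠ 0 → b ≠ 0 →
      eval ![0, a, b, c] p = 0 ∧ eval ![0, a, b, c] q = 0 := by
    intro a b c ha hb
    obtain ⟨s, hs⟩ := IsAlgClosed.exists_pow_nat_eq (a * b / 3) (n := 2) (by norm_num)
    have hb' : 3 * s ^ 2 / a = b := by rw [hs]; field_simp
    have hb'' : 3 * (-s) ^ 2 / a = b := by rw [neg_sq, hb']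
    have k1 := key a s c ha
    have k2 := key a (-s) c ha
    rw [hb'] at k1
    rw [hb''] at k2
    have hs0 : s ≠ 0 := by
      rintro rfl
      simp at hb'
      exact hb hb'.symm
    refine ⟨by linear_combination (k1 + k2) / 2, ?_⟩
    have : eval ![0, a, b, c] q * s = 0 := by linear_combination (k1 - k2) / 2
    exact (mul_eq_zero.mp this).resolve_right hs0
  obtain ⟨p', rfl⟩ := X_dvd_of_eval p fun a b c ha hb => (both a b c ha hb).1
  obtain ⟨q', rfl⟩ := X_dvd_of_eval q fun a b c ha hb => (both a b c ha hb).2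
  have e : x₁ * P = x₁ * (aeval ![x₁, x₂, w1, w2] p' + aeval ![x₁, x₂, w1, w2] q' * w) := by
    rw [hpq]
    simp only [map_mul, aeval_X, Matrix.cons_val_zero]
    ring
  have hx : x₁ ≠ 0 := X_ne_zero _
  rw [mul_left_cancel₀ hx e]
  exact add_mem (aeval_mem _) (mul_mem (aeval_mem _) w_mem)

/-- The value of `Q` at the normalized jet `(x₁, x₂, 0, w / x₁, 0, w1 / x₁ ^ 2)` is, up to a power
of `x₁`, the value of an element of `genAlg`. -/
lemma exists_clear_denominators (Q : JetRing2) : ∃ N : ℕ, ∃ H ∈ genAlg,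
    ∀ v : Fin 2 × Fin 3 → ℂ, eval v x₁ ≠ 0 →
      eval v H = eval v x₁ ^ N * eval (jetPt (eval v x₁) (eval v x₂) 0 (eval v w / eval v x₁) 0
        (eval v w1 / eval v x₁ ^ 2)) Q := by
  induction Q using MvPolynomial.induction_on with
  | C a => exact ⟨0, C a, genAlg.algebraMap_mem a, by simp⟩
  | add P Q hP hQ =>
    obtain ⟨N, H, hH, h⟩ := hP
    obtain ⟨M, K, hK, k⟩ := hQ
    refine ⟨N + M, x₁ ^ M * H + x₁ ^ N * K, add_mem (mul_mem (pow_mem x₁_mem _) hH)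
      (mul_mem (pow_mem x₁_mem _) hK), fun v hv => ?_⟩
    simp only [map_add, map_mul, map_pow, h v hv, k v hv]
    ring
  | mul_X P i hP =>
    obtain ⟨N, H, hH, h⟩ := hP
    -- each normalized coordinate is `K / x₁ ^ 2` for some `K` in the algebra
    have hK : ∃ K ∈ genAlg, ∀ v : Fin 2 × Fin 3 → ℂ, eval v x₁ ≠ 0 →
        eval v K = eval v x₁ ^ 2 * jetPt (eval v x₁) (eval v x₂) 0 (eval v w / eval v x₁) 0
          (eval v w1 / eval v x₁ ^ 2) i := by
      obtain ⟨i, j⟩ := i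
      fin_cases i <;> fin_cases j
      · exact ⟨x₁ ^ 2 * x₁, mul_mem (pow_mem x₁_mem _) x₁_mem, by simp [jetPt]⟩
      · exact ⟨0, zero_mem _, by simp [jetPt]⟩
      · exact ⟨0, zero_mem _, by simp [jetPt]⟩
      · exact ⟨x₁ ^ 2 * x₂, mul_mem (pow_mem x₁_mem _) x₂_mem, by simp [jetPt]⟩
      · refine ⟨x₁ * w, mul_mem x₁_mem w_mem, fun v hv => ?_⟩
        simp [jetPt]
        field_simp
      · refine ⟨w1, w1_mem, fun v hv => ?_⟩
        simp [jetPt]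
        field_simp
    obtain ⟨K, hK, k⟩ := hK
    refine ⟨N + 2, H * K, mul_mem hH hK, fun v hv => ?_⟩
    rw [map_mul, map_mul, h v hv, k v hv, eval_X]
    ring

lemma exists_pow_mul_mem {Q : JetRing2} (hQ : Q ∈ A3) : ∃ N : ℕ, x₁ ^ N * Q ∈ genAlg := by
  obtain ⟨N, H, hH, h⟩ := exists_clear_denominators Q
  refine ⟨N, ?_⟩
  suffices e : H - x₁ ^ N * Q = 0 by rwa [← sub_eq_zero.mp e]
  refine eq_zero_of_eval (0, 0) _ fun v hv => ?_
  have hx : eval v x₁ = v (0, 0) := by simp [x₁]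
  rw [map_sub, h v (hx ▸ hv), map_mul, map_pow, ← mul_sub]
  refine mul_eq_zero_of_right _ (sub_eq_zero.mpr ?_)
  -- the reparametrization which makes `f₁''` and then `f₁'''` vanish
  have inv := congrArg (eval v) (hQ (-v (0, 1) / (2 * v (0, 0)))
    ((3 * v (0, 1) ^ 2 / v (0, 0) - v (0, 2)) / (6 * v (0, 0))))
  rw [eval_aeval_eq] at inv
  rw [← inv]
  congr 2
  funext ⟨i, j⟩
  fin_cases i <;> fin_cases j <;> simp [jetPt, reparamVar, x₁, x₂, w, w1] <;> field_simp <;> ring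

lemma mem_genAlg_of_mem_A3 {Q : JetRing2} (hQ : Q ∈ A3) : Q ∈ genAlg := by
  obtain ⟨N, hN⟩ := exists_pow_mul_mem hQ
  induction N with
  | zero => simpa using hN
  | succ n ih =>
    refine ih (mem_of_x₁_mul_mem ?_)
    rwa [← mul_assoc, ← pow_succ']

lemma mem_A3_of_mem_genAlg {Q : JetRing2} (hQ : Q ∈ genAlg) : Q ∈ A3 := by
  intro b₂ b₃
  have h6 : (C 6 : JetRing2) = C 3 * C 2 := by
    rw [← C_mul]
    norm_num
  have hle : genAlg ≤ AlgHom.equalizer (aeval (reparamVar b₂ b₃)) (AlgHom.id ℂ JetRing2) := by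
    refine Algebra.adjoin_le ?_
    rintro x (rfl | rfl | rfl | rfl | rfl) <;>
      simp [x₁, x₂, w1, w2, w, reparamVar, algebraMap_eq, h6] <;> ring
  exact hle hQ

/-- The involution `f'' ↦ -f''`. -/
def flip₂ : JetRing2 →ₐ[ℂ] JetRing2 := aeval fun i => if i.2 = 1 then -X i else X i

lemma flip₂_w : flip₂ w = -w := by
  simp [flip₂, w]
  ring

lemma flip₂_eq {P : JetRing2} (hP : P ∈ Algebra.adjoin ℂ ({x₁, x₂, w1, w2} : Set JetRing2)) :
    flip₂ P = P := by
  have hle : Algebra.adjoin ℂ ({x₁, x₂, w1, w2} : Set JetRing2) ≤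
      AlgHom.equalizer flip₂ (AlgHom.id ℂ JetRing2) := by
    refine Algebra.adjoin_le ?_
    rintro x (rfl | rfl | rfl | rfl)
    · simp [flip₂, x₁]
    · simp [flip₂, x₂]
    · simp [w1, flip₂_w]
      simp [flip₂]
      ring
    · simp [w2, flip₂_w]
      simp [flip₂]
      ring
  exact hle hP

lemma w_ne_zero : w ≠ 0 := by
  intro h
  have := (eval_jetPt 1 0 0 1 0 0).2.2.1
  simp [h] at this

lemma algebraicIndependent_gens : AlgebraicIndependent ℂ ![x₁, x₂, w1, w2] := by
  rw [algebraicIndependent_iff]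
  intro p hp
  refine eq_zero_of_eval 0 _ fun u hu => ?_
  -- a jet with `f₁'' = f₁''' = 0` whose invariants are `u`
  obtain ⟨s, hs⟩ := IsAlgClosed.exists_pow_nat_eq
    ((u 1 * u 2 / u 0 - u 3) / (3 * u 0)) (n := 2) (by norm_num)
  obtain ⟨e1, e2, -, e4, e5⟩ := eval_jetPt (u 0) (u 1) 0 s 0 (u 2 / u 0 ^ 2)
  have := congrArg (eval (jetPt (u 0) (u 1) 0 s 0 (u 2 / u 0 ^ 2))) hp
  rw [eval_aeval_gens, e1, e2, e4, e5, map_zero] at this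
  rw [← this]
  congr 2
  funext i
  fin_cases i
  · rfl
  · rfl
  · simp
    field_simp
  · have : u 3 = u 1 * u 2 / u 0 - 3 * u 0 * s ^ 2 := by
      rw [hs]
      field_simp
      ring
    simp
    rw [this]
    field_simp

/-- **Demailly's theorem on invariant 3-jet differentials in dimension 2:**
`A₃ = ℂ[f₁', f₂', w₁₂¹, w₁₂²][w₁₂]`, with the relation `3w₁₂² = f₂'w₁₂¹ - f₁'w₁₂²`; moreover
`w₁₂` has degree exactly 2 over `ℂ[f₁', f₂', w₁₂¹, w₁₂²]` (it satisfies the above quadratic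
relation, and `P·w₁₂ = Q` with `P, Q ∈ ℂ[f₁', f₂', w₁₂¹, w₁₂²]` forces `P = Q = 0`), and
`f₁', f₂', w₁₂¹, w₁₂²` are algebraically independent over `ℂ`. -/
theorem demailly_invariant_3jets_dim2 :
    A3 = (Algebra.adjoin ℂ ({x₁, x₂, w1, w2, w} : Set JetRing2) : Subalgebra ℂ JetRing2) ∧
    C 3 * w ^ 2 = x₂ * w1 - x₁ * w2 ∧
    (∀ P Q : JetRing2,
      P ∈ Algebra.adjoin ℂ ({x₁, x₂, w1, w2} : Set JetRing2) →
      Q ∈ Algebra.adjoin ℂ ({x₁, x₂, w1, w2} : Set JetRing2) →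
      P * w = Q → P = 0 ∧ Q = 0) ∧
    AlgebraicIndependent ℂ ![x₁, x₂, w1, w2] := by
  refine ⟨Set.ext fun Q => ⟨mem_genAlg_of_mem_A3, mem_A3_of_mem_genAlg⟩, wronskian_relation, ?_,
    algebraicIndependent_gens⟩
  intro P Q hP hQ h
  have h' : P * -w = Q := by
    have := congrArg flip₂ h
    rwa [map_mul, flip₂_w, flip₂_eq hP, flip₂_eq hQ] at this
  have hPw : P * w = 0 := by
    refine self_eq_neg.mp ?_
    rw [← mul_neg, h, h']
  exact ⟨(mul_eq_zero.mp hPw).resolve_right w_ne_zero, by rw [← h, hPw]⟩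
end
end
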